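/- For all t > 0 and x ∈ ℝ, ∫_{C_W} exp(−t ∫₀¹ (x + √(2t) w(s))² ds) dm_W(w) = cosh(2t)^{−1/2} exp(−(1/2)(sinh(2t)/cosh(2t)) x²). -/

import Mathlib

/-!
The integrand is the pointwise limit, bounded by `1`, of `exp (-(t/n) ∑ᵢ (x + √(2t) w(i/n))²)`
(`tendsto_riemannSum`), so it suffices to compute the expectation of the latter. By the
finite-dimensional distributions it is an `n`-fold Gaussian integral along a Markov chain with steps
of variance `δ = 1/n`. Integrating out one variable maps `c^(-1/2) exp(-½ (s/c) y²)` to a function of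
the same form, where with `h = 2t/n` the coefficients satisfy
`s_{k+1} = s_k + h c_k`, `c_{k+1} = c_k + h s_{k+1}`
(`lintegral_gaussian_step`, `lintegral_chainWeight`). This is the symplectic Euler scheme for
`ds/du = c`, `dc/du = s`, started at `(0, 1)`. With `h = 2 sinh (θ/2)` the addition formulas solve it
exactly: `s_k = sinh (kθ) / cosh (θ/2)`, `c_k = cosh (kθ + θ/2) / cosh (θ/2)`
(`integral_exp_grid_explicit`). Since `θ = 2 arsinh (t/n)` satisfies `nθ → 2t`
(`tendsto_mul_step`), `s_n → sinh (2t)` and `c_n → cosh (2t)`.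
-/

open MeasureTheory Real Filter Topology

noncomputable section


/-- The classical Wiener space: continuous functions on `[0,1]` vanishing at `0`. -/
def CW : Type := {w : C(Set.Icc (0:ℝ) 1, ℝ) // w ⟨0, by norm_num⟩ = 0}

instance : TopologicalSpace CW := by unfold CW; infer_instance
instance : MeasurableSpace CW := borel CW

/-- Evaluation of an element of the Wiener space at a time `s` (clamped to `[0,1]`). -/
def CW.eval (w : CW) (s : ℝ) : ℝ := w.1 (Set.projIcc (0:ℝ) 1 zero_le_one s)

/-- The value preceding index `i`, with the convention that it is `0` for `i = 0`. -/
def prevVal {n : ℕ} (v : Fin n → ℝ) (i : Fin n) : ℝ :=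
  if h : (i : ℕ) = 0 then 0 else v ⟨(i : ℕ) - 1, by have := i.isLt; omega⟩

/-- The normal (Gaussian) density of the finite-dimensional distributions of Brownian
motion at times `t 0 < t 1 < ⋯ < t (n-1)`. -/
def normalDensity {n : ℕ} (t : Fin n → ℝ) (ξ : Fin n → ℝ) : ℝ :=
  (Real.sqrt ((2 * π) ^ n * ∏ i, (t i - prevVal t i)))⁻¹ *
    Real.exp (-(1 / 2) * ∑ i, (ξ i - prevVal ξ i) ^ 2 / (t i - prevVal t i))

/-- `μ` is the Wiener measure: a probability measure on `CW` whose finite-dimensional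
distributions at times `0 < t 0 < t 1 < ⋯ < t (n-1) ≤ 1` have the normal density. -/
structure IsWienerMeasure (μ : Measure CW) : Prop where
  prob : IsProbabilityMeasure μ
  fdd : ∀ (n : ℕ) (t : Fin n → ℝ), StrictMono t → (∀ i, 0 < t i) → (∀ i, t i ≤ 1) →
    Measure.map (fun (w : CW) (i : Fin n) => w.eval (t i)) μ =
      MeasureTheory.volume.withDensity (fun ξ => ENNReal.ofReal (normalDensity t ξ))

/-- The Feynman–Kac type integral of the paper:
`S(v₀,c)(t,x) = ∫_{C_W} v₀(√(2t) w(1)+x) exp(−t∫₀¹ (x+√(2t)w(s))² ds)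
  exp(−t∫₀¹ c(t(1−s), √(2t)w(s)+x) ds) dm_W(w)`. -/
def wienerFK (μ : Measure CW) (v₀ : ℝ → ℝ) (c : ℝ → ℝ → ℝ) (t x : ℝ) : ℝ :=
  ∫ w : CW,
    v₀ (Real.sqrt (2 * t) * w.eval 1 + x) *
      Real.exp (-(t * ∫ s in (0:ℝ)..1, (x + Real.sqrt (2 * t) * w.eval s) ^ 2)) *
      Real.exp (-(t * ∫ s in (0:ℝ)..1,
        c (t * (1 - s)) (Real.sqrt (2 * t) * w.eval s + x))) ∂μ


/-- The transition kernel of Brownian motion over time `δ` maps the Gaussian function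
`C exp(-½ β (x + σ b)²)` of the end point `b` to a Gaussian function of the starting point `a`. -/
lemma lintegral_gaussian_step {δ β : ℝ} (hδ : 0 < δ) (hβ : 0 ≤ β) (x σ a C : ℝ) (hC : 0 ≤ C) :
    ∫⁻ b : ℝ, ENNReal.ofReal ((√(2 * π * δ))⁻¹ * exp (-(1 / 2) * ((b - a) ^ 2 / δ))
        * (C * exp (-(1 / 2) * β * (x + σ * b) ^ 2)))
      = ENNReal.ofReal (C * (√(1 + β * σ ^ 2 * δ))⁻¹
          * exp (-(1 / 2) * (β / (1 + β * σ ^ 2 * δ)) * (x + σ * a) ^ 2)) := by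
  have hD : 0 < 1 + β * σ ^ 2 * δ := by positivity
  set D := 1 + β * σ ^ 2 * δ with hDdef
  -- completing the square: the exponent is a Gaussian of precision `D / δ` centred at `m`
  set m : ℝ := (a - β * σ * δ * x) / D with hm
  have hp : 0 < D / (2 * δ) := by positivity
  have key : ∀ b : ℝ, (√(2 * π * δ))⁻¹ * exp (-(1 / 2) * ((b - a) ^ 2 / δ))
        * (C * exp (-(1 / 2) * β * (x + σ * b) ^ 2))
      = ((√(2 * π * δ))⁻¹ * C * exp (-(1 / 2) * (β / D) * (x + σ * a) ^ 2))
        * exp (-(D / (2 * δ)) * (b - m) ^ 2) := by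
    intro b
    have : -(1 / 2) * ((b - a) ^ 2 / δ) + -(1 / 2) * β * (x + σ * b) ^ 2
        = -(1 / 2) * (β / D) * (x + σ * a) ^ 2 + -(D / (2 * δ)) * (b - m) ^ 2 := by
      rw [hm]; field_simp; rw [hDdef]; ring
    calc _ = (√(2 * π * δ))⁻¹ * C * (exp (-(1 / 2) * ((b - a) ^ 2 / δ))
        * exp (-(1 / 2) * β * (x + σ * b) ^ 2)) := by ring
      _ = _ := by rw [← exp_add, this, exp_add]; ring
  have hint : Integrable fun b : ℝ => exp (-(D / (2 * δ)) * (b - m) ^ 2) :=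
    (integrable_exp_neg_mul_sq hp).comp_sub_right m
  simp_rw [key]
  rw [← ofReal_integral_eq_lintegral_ofReal (hint.const_mul _)
    (ae_of_all _ fun b => by positivity), integral_const_mul,
    integral_sub_right_eq_self (fun b => exp (-(D / (2 * δ)) * b ^ 2)) m, integral_gaussian]
  congr 1
  have hs : √(π / (D / (2 * δ))) = √(2 * π * δ) * (√D)⁻¹ := by
    rw [← sqrt_inv, ← sqrt_mul (by positivity)]; congr 1; field_simp
  have h0 : √(2 * π * δ) ≠ 0 := by positivity
  rw [hs]; field_simp

/-- The joint density at `ξ` of `n` Gaussian steps of variance `δ` started from `a`, times the weight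
`∏ᵢ exp(-½ h (x + σ ξᵢ)²)`. The predecessor of `ξᵢ` is the entry `i.castSucc` of `(a, ξ)`. -/
def chainWeight (δ h x σ : ℝ) {n : ℕ} (a : ℝ) (ξ : Fin n → ℝ) : ℝ :=
  ∏ i : Fin n, ((√(2 * π * δ))⁻¹
      * exp (-(1 / 2) * ((ξ i - (Fin.cons a ξ : Fin (n + 1) → ℝ) i.castSucc) ^ 2 / δ))
    * exp (-(1 / 2) * h * (x + σ * ξ i) ^ 2))

lemma chainWeight_nonneg (δ h x σ : ℝ) {n : ℕ} (a : ℝ) (ξ : Fin n → ℝ) :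
    0 ≤ chainWeight δ h x σ a ξ := Finset.prod_nonneg fun _ _ => by positivity

lemma chainWeight_cons (δ h x σ : ℝ) {n : ℕ} (a b : ℝ) (η : Fin n → ℝ) :
    chainWeight δ h x σ a (Fin.cons b η : Fin (n + 1) → ℝ) =
      (√(2 * π * δ))⁻¹ * exp (-(1 / 2) * ((b - a) ^ 2 / δ))
        * exp (-(1 / 2) * h * (x + σ * b) ^ 2) * chainWeight δ h x σ b η := by
  simp only [chainWeight, Fin.prod_univ_succ, Fin.castSucc_zero, Fin.cons_zero, Fin.cons_succ,
    ← Fin.succ_castSucc]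

lemma continuous_chainWeight (δ h x σ : ℝ) (n : ℕ) (a : ℝ) :
    Continuous fun ξ : Fin n → ℝ => chainWeight δ h x σ a ξ := by
  unfold chainWeight
  refine continuous_finsetProd _ fun i _ => ?_
  have h1 : Continuous fun ξ : Fin n → ℝ => (Fin.cons a ξ : Fin (n + 1) → ℝ) i.castSucc := by
    refine Fin.cases ?_ (fun j => ?_) i.castSucc <;> simp only [Fin.cons_zero, Fin.cons_succ] <;>
      fun_prop
  fun_prop

/-- The total mass of `chainWeight`, computed by integrating out the first variable last: the
Markov property makes the starting point `a` the parameter of the induction on `n`. -/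
lemma lintegral_chainWeight {δ h σ : ℝ} (hδ : 0 < δ) (hh : h = σ ^ 2 * δ) (x : ℝ)
    {c s : ℕ → ℝ} (c0 : c 0 = 1) (s0 : s 0 = 0) (hc : ∀ k, 0 < c k) (hs : ∀ k, 0 ≤ s k)
    (hs' : ∀ k, s (k + 1) = s k + h * c k) (hc' : ∀ k, c (k + 1) = c k + h * s (k + 1)) (n : ℕ) :
    ∀ a : ℝ, ∫⁻ ξ : Fin n → ℝ, ENNReal.ofReal (chainWeight δ h x σ a ξ)
      = ENNReal.ofReal ((√(c n))⁻¹ * exp (-(1 / 2) * (s n / c n) * (x + σ * a) ^ 2)) := by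
  have hh0 : 0 ≤ h := by rw [hh]; positivity
  induction n with
  | zero => intro a; simp [chainWeight, c0, s0, volume_pi]
  | succ n ih =>
    intro a
    have e := (volume_preserving_piFinSuccAbove (fun _ : Fin (n + 1) => ℝ) 0).symm
    have he : ∀ p : ℝ × (Fin n → ℝ),
        (MeasurableEquiv.piFinSuccAbove (fun _ : Fin (n + 1) => ℝ) 0).symm p
          = (Fin.cons p.1 p.2 : Fin (n + 1) → ℝ) := fun p => Fin.insertNth_zero' p.1 p.2
    rw [← e.lintegral_comp_emb (MeasurableEquiv.measurableEmbedding _), Measure.volume_eq_prod]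
    have hmeas := (continuous_chainWeight δ h x σ (n + 1) a).measurable.ennreal_ofReal.comp
      (MeasurableEquiv.piFinSuccAbove (fun _ : Fin (n + 1) => ℝ) 0).symm.measurable
    rw [lintegral_prod _ (by exact hmeas.aemeasurable)]
    simp_rw [he, chainWeight_cons]
    have step : ∀ b : ℝ, ∫⁻ η : Fin n → ℝ, ENNReal.ofReal
        ((√(2 * π * δ))⁻¹ * exp (-(1 / 2) * ((b - a) ^ 2 / δ))
          * exp (-(1 / 2) * h * (x + σ * b) ^ 2) * chainWeight δ h x σ b η)
        = ENNReal.ofReal ((√(2 * π * δ))⁻¹ * exp (-(1 / 2) * ((b - a) ^ 2 / δ))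
          * ((√(c n))⁻¹ * exp (-(1 / 2) * (s n / c n + h) * (x + σ * b) ^ 2))) := by
      intro b
      simp_rw [ENNReal.ofReal_mul (show 0 ≤ (√(2 * π * δ))⁻¹ * exp (-(1 / 2) * ((b - a) ^ 2 / δ))
          * exp (-(1 / 2) * h * (x + σ * b) ^ 2) by positivity)]
      rw [lintegral_const_mul _ (continuous_chainWeight δ h x σ n b).measurable.ennreal_ofReal,
        ih b, ← ENNReal.ofReal_mul (by positivity)]
      congr 1
      rw [show -(1 / 2) * (s n / c n + h) * (x + σ * b) ^ 2
        = -(1 / 2) * h * (x + σ * b) ^ 2 + -(1 / 2) * (s n / c n) * (x + σ * b) ^ 2 by ring,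
        exp_add]
      ring
    -- the factor `1 + β σ² δ` of the Gaussian step, with `β = s n / c n + h`, is `c (n+1) / c n`
    simp_rw [step]
    have hcn := hc n
    have hcn' := hc (n + 1)
    have hD : 1 + (s n / c n + h) * σ ^ 2 * δ = c (n + 1) / c n := by
      rw [mul_assoc, ← hh, hc', hs']; field_simp
    rw [lintegral_gaussian_step hδ (add_nonneg (div_nonneg (hs n) (hc n).le) hh0) x σ a _
      (by positivity), hD, sqrt_div' _ (hc n).le]
    congr 2
    · have : √(c n) ≠ 0 := by positivity
      field_simp
    · congr 3
      rw [hs']; field_simp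

/-- Right-endpoint Riemann sums of a continuous function on `[0, 1]` converge to its integral. -/
lemma tendsto_riemannSum {f : ℝ → ℝ} (hf : Continuous f) :
    Tendsto (fun n : ℕ => (1 / (n : ℝ)) * ∑ i : Fin n, f (((i : ℕ) + 1) / (n : ℝ))) atTop
      (𝓝 (∫ s in (0 : ℝ)..1, f s)) := by
  rw [Metric.tendsto_atTop]
  intro ε hε
  have hu := isCompact_Icc.uniformContinuousOn_of_continuous (s := Set.Icc (0 : ℝ) 1) hf.continuousOn
  rw [Metric.uniformContinuousOn_iff] at hu
  obtain ⟨r, hr, hu⟩ := hu (ε / 2) (by positivity)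
  obtain ⟨N, hN⟩ := exists_nat_gt (1 / r)
  refine ⟨N + 1, fun n hn => ?_⟩
  have hn0 : (0 : ℝ) < n := by exact_mod_cast (by omega : 0 < n)
  have hnr : 1 / (n : ℝ) < r := by
    rw [div_lt_iff₀ hn0]
    rw [div_lt_iff₀ hr] at hN
    have : (N : ℝ) ≤ n := by exact_mod_cast (by omega : N ≤ n)
    nlinarith
  have hsplit := intervalIntegral.sum_integral_adjacent_intervals (μ := volume) (f := f)
    (a := fun k : ℕ => (k : ℝ) / n) (n := n) (fun k _ => hf.intervalIntegrable _ _)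
  simp only [Nat.cast_zero, zero_div, div_self hn0.ne'] at hsplit
  rw [← hsplit, Fin.sum_univ_eq_sum_range (fun i => f (((i : ℕ) + 1) / (n : ℝ))) n, Finset.mul_sum,
    Real.dist_eq, ← Finset.sum_sub_distrib]
  have hterm : ∀ i ∈ Finset.range n, |1 / (n : ℝ) * f (((i : ℕ) + 1) / (n : ℝ))
      - ∫ s in ((i : ℝ) / n)..(((i + 1 : ℕ) : ℝ) / n), f s| ≤ ε / 2 * (1 / n) := by
    intro i hi
    have hi' : (i : ℝ) + 1 ≤ n := by exact_mod_cast Finset.mem_range.1 hi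
    have hle : (i : ℝ) / n ≤ ((i : ℝ) + 1) / n := by gcongr; linarith
    have hlen : ((i : ℝ) + 1) / n - i / n = 1 / n := by ring
    push_cast
    have hconst : 1 / (n : ℝ) * f (((i : ℝ) + 1) / n)
        = ∫ _ in ((i : ℝ) / n)..(((i : ℝ) + 1) / n), f (((i : ℝ) + 1) / n) := by
      rw [intervalIntegral.integral_const, hlen, smul_eq_mul]
    rw [hconst, ← intervalIntegral.integral_sub (by simp) (hf.intervalIntegrable _ _)]
    have := intervalIntegral.norm_integral_le_of_norm_le_const (a := (i : ℝ) / n)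
      (b := ((i : ℝ) + 1) / n) (C := ε / 2) (f := fun s => f (((i : ℝ) + 1) / n) - f s) ?_
    · rwa [hlen, abs_of_pos (by positivity)] at this
    · intro s hs
      rw [Set.uIoc_of_le hle] at hs
      have h1 : ((i : ℝ) + 1) / n ≤ 1 := by rw [div_le_one hn0]; exact hi'
      have h0 : 0 ≤ (i : ℝ) / n := by positivity
      change |_| ≤ _
      rw [← Real.dist_eq]
      refine (hu _ ⟨by positivity, h1⟩ s ⟨h0.trans hs.1.le, hs.2.trans h1⟩ ?_).le
      rw [Real.dist_eq, abs_of_nonneg (by linarith [hs.2])]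
      linarith [hs.1]
  calc _ ≤ ∑ i ∈ Finset.range n, _ := Finset.abs_sum_le_sum_abs _ _
    _ ≤ ∑ i ∈ Finset.range n, ε / 2 * (1 / n) := Finset.sum_le_sum hterm
    _ = ε / 2 := by rw [Finset.sum_const, Finset.card_range, nsmul_eq_mul]; field_simp
    _ < ε := by linarith

instance : BorelSpace CW := ⟨rfl⟩

lemma CW.continuous_eval_left (s : ℝ) : Continuous fun w : CW => w.eval s :=
  (continuous_eval_const (Set.projIcc (0 : ℝ) 1 zero_le_one s)).comp
    continuous_subtype_val

lemma CW.continuous_eval_right (w : CW) : Continuous fun s : ℝ => w.eval s :=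
  w.1.continuous.comp continuous_projIcc

lemma prevVal_eq_cons {n : ℕ} (v : Fin n → ℝ) (i : Fin n) :
    prevVal v i = (Fin.cons 0 v : Fin (n + 1) → ℝ) i.castSucc := by
  obtain ⟨i, hi⟩ := i
  cases i with
  | zero => rfl
  | succ k => rfl

lemma grid_sub_prevVal {n : ℕ} (i : Fin n) :
    ((i : ℕ) + 1 : ℝ) / n - prevVal (fun j : Fin n => ((j : ℕ) + 1 : ℝ) / n) i = 1 / n := by
  obtain ⟨i, hi⟩ := i
  cases i with
  | zero => simp [prevVal]
  | succ k => simp [prevVal]; ring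

lemma normalDensity_mul_exp_eq {n : ℕ} (t x σ : ℝ) (ξ : Fin n → ℝ) :
    normalDensity (fun j : Fin n => ((j : ℕ) + 1 : ℝ) / n) ξ
        * exp (-(t * (1 / (n : ℝ) * ∑ i, (x + σ * ξ i) ^ 2)))
      = chainWeight (1 / n) (2 * t * (1 / n)) x σ 0 ξ := by
  unfold normalDensity chainWeight
  simp_rw [grid_sub_prevVal, Finset.prod_mul_distrib, ← exp_sum, prevVal_eq_cons, Finset.prod_const,
    Finset.card_univ, Fintype.card_fin, ← mul_pow, ← Finset.mul_sum, inv_pow]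
  congr 2
  · congr 2
    have hy : 0 ≤ 2 * π * (1 / (n : ℝ)) := by positivity
    nth_rw 1 [← sq_sqrt hy]
    rw [← pow_mul, mul_comm 2 n, pow_mul, sqrt_sq (by positivity)]
  · ring

/-- The discretized Wiener integral on the grid `1/n, 2/n, …, 1`, in terms of a solution `(s, c)` of
the symplectic Euler recursion with step `2t/n`. -/
lemma integral_exp_grid {μ : Measure CW} (hμ : IsWienerMeasure μ) {t : ℝ} (ht : 0 < t) (x : ℝ)
    {n : ℕ} (hn : 0 < n) {c s : ℕ → ℝ} (c0 : c 0 = 1) (s0 : s 0 = 0) (hc : ∀ k, 0 < c k)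
    (hs : ∀ k, 0 ≤ s k) (hs' : ∀ k, s (k + 1) = s k + 2 * t * (1 / n) * c k)
    (hc' : ∀ k, c (k + 1) = c k + 2 * t * (1 / n) * s (k + 1)) :
    ∫ w : CW, exp (-(t * (1 / (n : ℝ)
        * ∑ i : Fin n, (x + √(2 * t) * w.eval (((i : ℕ) + 1) / (n : ℝ))) ^ 2))) ∂μ
      = (√(c n))⁻¹ * exp (-(1 / 2) * (s n / c n) * x ^ 2) := by
  have hn0 : (0 : ℝ) < n := by exact_mod_cast hn
  have hfdd := hμ.fdd n (fun j : Fin n => ((j : ℕ) + 1 : ℝ) / n)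
    (fun i j hij => by
      have : ((i : ℕ) : ℝ) < (j : ℕ) := by exact_mod_cast hij
      simp only; gcongr)
    (fun i => by positivity)
    (fun i => by rw [div_le_one hn0]; exact_mod_cast i.isLt)
  have hev : Measurable fun (w : CW) (i : Fin n) => w.eval (((i : ℕ) + 1 : ℝ) / n) :=
    measurable_pi_lambda _ fun i => (CW.continuous_eval_left _).measurable
  set g : (Fin n → ℝ) → ℝ := fun ξ => exp (-(t * (1 / (n : ℝ) * ∑ i, (x + √(2 * t) * ξ i) ^ 2)))
    with hg
  have hgc : Continuous g := by fun_prop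
  have hnd : Continuous fun ξ : Fin n → ℝ =>
      normalDensity (fun j : Fin n => ((j : ℕ) + 1 : ℝ) / n) ξ := by
    unfold normalDensity
    simp_rw [grid_sub_prevVal]
    have : ∀ i : Fin n, Continuous fun ξ : Fin n → ℝ => prevVal ξ i := fun i => by
      unfold prevVal; split_ifs <;> fun_prop
    fun_prop
  calc _ = ∫ w, g (fun i : Fin n => w.eval (((i : ℕ) + 1 : ℝ) / n)) ∂μ := rfl
    _ = ∫ ξ, g ξ ∂(volume.withDensity fun ξ => ENNReal.ofReal
          (normalDensity (fun j : Fin n => ((j : ℕ) + 1 : ℝ) / n) ξ)) := by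
      rw [← hfdd, integral_map hev.aemeasurable hgc.aestronglyMeasurable]
    _ = (∫⁻ ξ : Fin n → ℝ,
          ENNReal.ofReal (chainWeight (1 / n) (2 * t * (1 / n)) x (√(2 * t)) 0 ξ)).toReal := by
      rw [integral_eq_lintegral_of_nonneg_ae (ae_of_all _ fun ξ => (exp_pos _).le)
        hgc.aestronglyMeasurable, lintegral_withDensity_eq_lintegral_mul _
        hnd.measurable.ennreal_ofReal hgc.measurable.ennreal_ofReal]
      congr 2
      ext ξ
      rw [Pi.mul_apply, ← ENNReal.ofReal_mul' (exp_pos _).le, ← normalDensity_mul_exp_eq]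
    _ = _ := by
      rw [lintegral_chainWeight (by positivity) (by rw [sq_sqrt (by positivity)]) x c0 s0 hc hs hs'
        hc', ENNReal.toReal_ofReal (by positivity), mul_zero, add_zero]

lemma tendsto_mul_step (t : ℝ) :
    Tendsto (fun n : ℕ => (n : ℝ) * (2 * arsinh (t / n))) atTop (𝓝 (2 * t)) := by
  have h2 : HasDerivAt (fun u : ℝ => 2 * arsinh (t * u)) (2 * t) 0 := by
    have h3 := (((hasDerivAt_id (0 : ℝ)).const_mul t).arsinh).const_mul 2
    simpa using h3
  -- the difference quotient at `0` along `u = 1/n`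
  have h4 := h2.tendsto_slope_zero_right.comp (tendsto_inv_atTop_nhdsGT_zero.comp
    (tendsto_natCast_atTop_atTop (R := ℝ)))
  refine h4.congr fun n => ?_
  simp [div_eq_mul_inv]

/-- The discretized Wiener integral in closed form: for step `h = 2 sinh (θ/2)` the recursion is
solved by `s k = sinh (kθ) / cosh (θ/2)` and `c k = cosh (kθ + θ/2) / cosh (θ/2)`. -/
lemma integral_exp_grid_explicit {μ : Measure CW} (hμ : IsWienerMeasure μ) {t : ℝ} (ht : 0 < t)
    (x : ℝ) {n : ℕ} (hn : 0 < n) {θ : ℝ} (hθ : θ = 2 * arsinh (t / n)) :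
    ∫ w : CW, exp (-(t * (1 / (n : ℝ)
        * ∑ i : Fin n, (x + √(2 * t) * w.eval (((i : ℕ) + 1) / (n : ℝ))) ^ 2))) ∂μ
      = (√(cosh (n * θ + θ / 2) / cosh (θ / 2)))⁻¹
        * exp (-(1 / 2) * (sinh (n * θ) / cosh (n * θ + θ / 2)) * x ^ 2) := by
  have hn0 : (0 : ℝ) < n := by exact_mod_cast hn
  have hh : 2 * t * (1 / n) = 2 * sinh (θ / 2) := by
    rw [hθ, mul_div_cancel_left₀ _ two_ne_zero, sinh_arsinh]; ring
  have hθ0 : 0 ≤ θ := by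
    rw [hθ]; exact mul_nonneg zero_le_two (arsinh_nonneg_iff.2 (by positivity))
  have hc0 : cosh (θ / 2) ≠ 0 := (cosh_pos _).ne'
  rw [integral_exp_grid hμ ht x hn (c := fun k => cosh (k * θ + θ / 2) / cosh (θ / 2))
    (s := fun k => sinh (k * θ) / cosh (θ / 2)) (by simp [hc0]) (by simp)
    (fun k => div_pos (cosh_pos _) (cosh_pos _))
    (fun k => div_nonneg (sinh_nonneg_iff.2 (by positivity)) (cosh_pos _).le) ?_ ?_]
  · rw [div_div_div_cancel_right₀ hc0]
  · intro k
    -- `sinh (m + θ/2) - sinh (m - θ/2) = 2 cosh m sinh (θ/2)` at `m = kθ + θ/2`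
    rw [hh]; push_cast
    rw [show ((k : ℝ) + 1) * θ = (k * θ + θ / 2) + θ / 2 by ring,
      show (k : ℝ) * θ = (k * θ + θ / 2) - θ / 2 by ring, sub_add_cancel, sinh_add, sinh_sub]
    field_simp; ring
  · intro k
    -- `cosh (m + θ/2) - cosh (m - θ/2) = 2 sinh m sinh (θ/2)` at `m = (k + 1)θ`
    rw [hh]; push_cast
    rw [show (k : ℝ) * θ + θ / 2 = (k + 1) * θ - θ / 2 by ring, cosh_add, cosh_sub]
    field_simp; ring

/-- **Corollary (explicit Wiener integral, `v₀ = 1`).** For all `t > 0` and `x ∈ ℝ`,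
`∫_{C_W} exp(−t∫₀¹ (x+√(2t)w(s))² ds) dm_W(w) = cosh(2t)^{−1/2} exp(−(1/2) tanh(2t) x²)`. -/
theorem wiener_integral_k
    (μ : Measure CW) (hμ : IsWienerMeasure μ) :
    ∀ t > (0:ℝ), ∀ x : ℝ,
      (∫ w : CW,
        Real.exp (-(t * ∫ s in (0:ℝ)..1, (x + Real.sqrt (2 * t) * w.eval s) ^ 2)) ∂μ) =
      (Real.sqrt (Real.cosh (2 * t)))⁻¹ *
        Real.exp (-(1 / 2) * (Real.sinh (2 * t) / Real.cosh (2 * t)) * x ^ 2) := by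
  intro t ht x
  have := hμ.prob
  have hlim : Tendsto (fun n : ℕ => ∫ w : CW, exp (-(t * (1 / (n : ℝ)
        * ∑ i : Fin n, (x + √(2 * t) * w.eval (((i : ℕ) + 1) / (n : ℝ))) ^ 2))) ∂μ) atTop
      (𝓝 (∫ w : CW, exp (-(t * ∫ s in (0:ℝ)..1, (x + √(2 * t) * w.eval s) ^ 2)) ∂μ)) := by
    refine tendsto_integral_of_dominated_convergence (fun _ => 1) (fun n => ?_)
      (integrable_const _) (fun n => ae_of_all _ fun w => ?_) (ae_of_all _ fun w => ?_)
    · have : ∀ s : ℝ, Continuous fun w : CW => w.eval s := CW.continuous_eval_left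
      exact Continuous.aestronglyMeasurable (by fun_prop)
    · rw [norm_eq_abs, abs_of_pos (exp_pos _), exp_le_one_iff]
      have : 0 ≤ ∑ i : Fin n, (x + √(2 * t) * w.eval (((i : ℕ) + 1) / (n : ℝ))) ^ 2 :=
        Finset.sum_nonneg fun i _ => sq_nonneg _
      have : 0 ≤ t * (1 / (n : ℝ)
        * ∑ i : Fin n, (x + √(2 * t) * w.eval (((i : ℕ) + 1) / (n : ℝ))) ^ 2) := by positivity
      linarith
    · have hw := w.continuous_eval_right
      have := tendsto_riemannSum (f := fun s => (x + √(2 * t) * w.eval s) ^ 2) (by fun_prop)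
      exact (continuous_exp.tendsto _).comp (this.const_mul t).neg
  -- the limit of the closed form is computed with `θ = 2 arsinh (t/n)`, so `θ/2 → 0`, `nθ → 2t`
  refine tendsto_nhds_unique hlim ?_
  have hev : ∀ᶠ n : ℕ in atTop, _ = _ := (eventually_gt_atTop 0).mono fun n hn =>
    (integral_exp_grid_explicit hμ ht x hn rfl).symm
  refine Tendsto.congr' hev ?_
  have hθ2 : Tendsto (fun n : ℕ => 2 * arsinh (t / n) / 2) atTop (𝓝 0) := by
    have h := ((tendsto_const_div_atTop_nhds_zero_nat t).arsinh.const_mul 2).div_const 2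
    simpa using h
  have hnθ := tendsto_mul_step t
  have hsum := hnθ.add hθ2
  rw [add_zero] at hsum
  have hC := (continuous_cosh.tendsto _).comp hsum
  have hS := (continuous_sinh.tendsto _).comp hnθ
  have hc2 := (continuous_cosh.tendsto _).comp hθ2
  rw [cosh_zero] at hc2
  have h1 := (hC.div hc2 one_ne_zero).sqrt.inv₀ (by rw [div_one]; exact (sqrt_pos.2 (cosh_pos _)).ne')
  have h2 := (continuous_exp.tendsto _).comp
    (((hS.div hC (cosh_pos _).ne').const_mul (-(1 / 2))).mul_const (x ^ 2))
  rw [div_one] at h1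
  exact h1.mul h2

end
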